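/- arXiv:2201.00816 — 3 statements merged into one kernel-verified Lean document; each statement's English description precedes it below -/
import Mathlib

section
/- Let n ≥ 1 and let p, q be two distinct points of ℍ^n lying on a line parallel to the t-axis (i.e., p and q have the same x- and y-coordinates but different t-coordinates). Then every geodetically convex subset of ℍ^n containing both p and q equals ℍ^n; equivalently, the smallest geodetically convex set containing p and q is the whole space ℍ^n. -/
open MeasureTheory Set Real
open scoped ENNReal NNReal

noncomputable section

/-- Points of the Heisenberg group `ℍⁿ`, written `(x, y, t)` with `x, y ∈ ℝⁿ`, `t ∈ ℝ`. -/
abbrev Hpt (n : ℕ) : Type := (Fin n → ℝ) × (Fin n → ℝ) × ℝ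

/-- The projection of a point of `ℍⁿ` onto the horizontal `z = (x,y)` plane, viewed as a
point of the Euclidean space `ℝ^{2n}` (so that lengths are Euclidean lengths). -/
def hproj {n : ℕ} (p : Hpt n) : EuclideanSpace ℝ (Fin n ⊕ Fin n) :=
  (WithLp.equiv 2 ((Fin n ⊕ Fin n) → ℝ)).symm (Sum.elim p.1 p.2.1)

/-- A curve `γ` is a horizontal curve on `[a,b]` if it is (absolutely continuous, here:
Lipschitz) and almost everywhere it has a derivative `γ' = (x', y', t')` satisfying the
horizontality condition `t' = 2 ∑ⱼ (xⱼ' yⱼ - yⱼ' xⱼ)`. -/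
def IsHorizontal {n : ℕ} (γ : ℝ → Hpt n) (a b : ℝ) : Prop :=
  a ≤ b ∧ (∃ K : NNReal, LipschitzOnWith K γ (Icc a b)) ∧
    ∃ γ' : ℝ → Hpt n,
      (∀ᵐ s ∂(volume.restrict (Icc a b)), HasDerivAt γ (γ' s) s) ∧
      (∀ᵐ s ∂(volume.restrict (Icc a b)),
        (γ' s).2.2 = 2 * ∑ j, ((γ' s).1 j * (γ s).2.1 j - (γ' s).2.1 j * (γ s).1 j))

/-- The length of a horizontal curve on `[a,b]`: the Euclidean length (total variation)
of its projection to the `z`-plane `ℝ^{2n}`. -/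
def hLength {n : ℕ} (γ : ℝ → Hpt n) (a b : ℝ) : ℝ≥0∞ :=
  eVariationOn (fun s => hproj (γ s)) (Icc a b)

/-- The Carnot–Carathéodory distance: the infimum of lengths of horizontal curves
joining `p` to `q`. -/
def ccDist {n : ℕ} (p q : Hpt n) : ℝ≥0∞ :=
  ⨅ (γ : ℝ → Hpt n) (a : ℝ) (b : ℝ) (_ : IsHorizontal γ a b)
    (_ : γ a = p) (_ : γ b = q), hLength γ a b

/-- `γ` is a geodesic on `[a,b]`: a horizontal curve whose length equals the
Carnot–Carathéodory distance between its endpoints. -/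
def IsGeodesicOn {n : ℕ} (γ : ℝ → Hpt n) (a b : ℝ) : Prop :=
  IsHorizontal γ a b ∧ hLength γ a b = ccDist (γ a) (γ b)

/-- A set `A ⊆ ℍⁿ` is geodetically convex if every geodesic connecting any two points of
`A` lies in `A`. -/
def GeodConvexSet {n : ℕ} (A : Set (Hpt n)) : Prop :=
  ∀ p ∈ A, ∀ q ∈ A, ∀ (γ : ℝ → Hpt n) (a b : ℝ),
    IsGeodesicOn γ a b → γ a = p → γ b = q → ∀ s ∈ Icc a b, γ s ∈ A

/-- A function `u : ℍⁿ → ℝ` is geodetically convex if its composition with every geodesic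
is convex. -/
def GeodConvexFun {n : ℕ} (u : Hpt n → ℝ) : Prop :=
  ∀ (γ : ℝ → Hpt n) (a b : ℝ), IsGeodesicOn γ a b → ConvexOn ℝ (Icc a b) (u ∘ γ)

/-- The union of the images of all geodesics connecting pairs of points of `S`. -/
def geodJoin {n : ℕ} (S : Set (Hpt n)) : Set (Hpt n) :=
  {z | ∃ p ∈ S, ∃ q ∈ S, ∃ (γ : ℝ → Hpt n) (a b : ℝ),
    IsGeodesicOn γ a b ∧ γ a = p ∧ γ b = q ∧ z ∈ γ '' Icc a b}

/-- The iterated geodesic hulls `G^m(A)`, with `G^0(A) = A`. -/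
def Gm {n : ℕ} (A : Set (Hpt n)) : ℕ → Set (Hpt n)
  | 0 => A
  | (m + 1) => geodJoin (Gm A m)

/-!
Let `J` be the rotation `(x, y) ↦ (y, -x)` of `ℝ²ⁿ`. Horizontality reads `t' = 2⟪z', J z⟫`, so a
horizontal curve over a closed curve rises by four times the enclosed area. The isoperimetric
inequality therefore shows that the lifts of full circles are geodesics.

If a geodetically convex set `A` contains two points of a vertical line, it contains the bubble of
all lifted circles joining them. Antipodal points of the bubble at equal heights are joined by
straight geodesics, so `A` contains the vertical segment between the two points. The bubble contains
two different heights over each off-axis point `w + σ J w` with `σ = ±1`, hence `A` contains the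
vertical segment between them, and then the bubble of a part of that segment. The latter rises
beyond the original endpoints; antipodal points bring its height back to the axis. In this way an
interval of half-length `r` on the vertical line grows to one of half-length `c r` with
`c = 3/8 + 9/(4π) > 1`. Iterating, `A` contains the whole vertical line, and lifted half circles
starting on it reach every point.
-/

section RealAnalysis

open scoped Topology

lemma exists_lipschitzOnWith_tan {θ : ℝ} (hθ : θ < π / 2) :
    ∃ K, LipschitzOnWith K tan (Icc (-θ) θ) := by
  have hsmooth : ContDiffOn ℝ 1 tan (Icc (-θ) θ) := fun x hx =>
    (contDiffAt_tan.2 (cos_pos_of_mem_Ioo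
      ⟨by linarith [hx.1], by linarith [hx.2]⟩).ne').contDiffWithinAt
  exact hsmooth.exists_lipschitzOnWith one_ne_zero (convex_Icc _ _) isCompact_Icc

lemma le_of_ae_deriv_nonneg {F : ℝ → ℝ} {a b : ℝ} (hab : a ≤ b)
    (hF : AbsolutelyContinuousOnInterval F a b)
    (hderiv : ∀ᵐ s ∂volume.restrict (Icc a b), 0 ≤ deriv F s) : F a ≤ F b := by
  rw [← sub_nonneg, ← hF.integral_deriv_eq_sub, intervalIntegral.integral_of_le hab,
    ← integral_Icc_eq_integral_Ioc]
  exact integral_nonneg_of_ae hderiv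

lemma norm_le_of_hasDerivAt_of_norm_sub_le {E : Type*} [NormedAddCommGroup E] [NormedSpace ℝ E]
    {f : ℝ → E} {g : ℝ → ℝ} {f' : E} {g' x : ℝ} (hf : HasDerivAt f f' x) (hg : HasDerivAt g g' x)
    (hfg : ∀ᶠ u in 𝓝[>] x, ‖f u - f x‖ ≤ g u - g x) : ‖f'‖ ≤ g' := by
  have hright : 𝓝[>] x ≤ 𝓝[≠] x := nhdsWithin_mono x fun u hu => ne_of_gt hu
  refine le_of_tendsto_of_tendsto ((hasDerivAt_iff_tendsto_slope.1 hf).mono_left hright).norm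
    ((hasDerivAt_iff_tendsto_slope.1 hg).mono_left hright) ?_
  filter_upwards [hfg, self_mem_nhdsWithin] with u hu hxu
  have hpos : 0 < u - x := sub_pos.2 hxu
  rw [slope_def_module, slope_def_field, norm_smul, norm_inv, norm_of_nonneg hpos.le,
    div_eq_inv_mul]
  gcongr

lemma norm_sub_le_variationOnFromTo_sub {E : Type*} [NormedAddCommGroup E] {f : ℝ → E} {s : Set ℝ}
    (hf : LocallyBoundedVariationOn f s) {a x y : ℝ} (ha : a ∈ s) (hx : x ∈ s) (hy : y ∈ s)
    (hxy : x ≤ y) : ‖f y - f x‖ ≤ variationOnFromTo f s a y - variationOnFromTo f s a x := by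
  rw [variationOnFromTo.sub_right hf ha hy hx, variationOnFromTo.eq_of_le _ _ hxy,
    ← dist_eq_norm, dist_edist]
  exact ENNReal.toReal_mono (hf x y hx hy) (eVariationOn.edist_le f ⟨hy, hxy, le_rfl⟩
    ⟨hx, le_rfl, hxy⟩)

lemma eVariationOn_inter_Icc_le_of_lipschitzOnWith {E : Type*} [PseudoEMetricSpace E]
    {f : ℝ → E} {C : ℝ≥0} {s : Set ℝ} (hf : LipschitzOnWith C f s) {x y : ℝ} (hx : x ∈ s)
    (hy : y ∈ s) :
    eVariationOn f (s ∩ Icc x y) ≤ C * ENNReal.ofReal (y - x) := by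
  rw [← eVariationOn_id hx hy]
  exact (hf.mono inter_subset_left).comp_eVariationOn_le (mapsTo_id _)

lemma lipschitzOnWith_variationOnFromTo {E : Type*} [PseudoEMetricSpace E] {f : ℝ → E} {C : ℝ≥0}
    {s : Set ℝ} (hf : LipschitzOnWith C f s) {a : ℝ} (ha : a ∈ s) :
    LipschitzOnWith C (variationOnFromTo f s a) s := by
  refine LipschitzOnWith.of_le_add_mul C fun x hx y hy => ?_
  have hbv := hf.locallyBoundedVariationOn
  rw [← sub_le_iff_le_add', variationOnFromTo.sub_right hbv ha hx hy]
  rcases le_total x y with hxy | hyx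
  · exact (variationOnFromTo.nonpos_of_ge f s hxy).trans (by positivity)
  · rw [variationOnFromTo.eq_of_le _ _ hyx, Real.dist_eq, abs_of_nonneg (sub_nonneg.2 hyx)]
    refine ENNReal.toReal_le_of_le_ofReal (mul_nonneg C.coe_nonneg (sub_nonneg.2 hyx)) ?_
    rw [ENNReal.ofReal_mul C.coe_nonneg, ENNReal.ofReal_coe_nnreal]
    exact eVariationOn_inter_Icc_le_of_lipschitzOnWith hf hy hx

lemma ae_exists_hasDerivAt_variationOnFromTo {E : Type*} [NormedAddCommGroup E] [NormedSpace ℝ E]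
    {f : ℝ → E} {C : ℝ≥0} {a b : ℝ} (hf : LipschitzOnWith C f (Icc a b)) (hab : a ≤ b) :
    ∀ᵐ s ∂volume.restrict (Icc a b), ∀ f', HasDerivAt f f' s →
      ∃ v, HasDerivAt (variationOnFromTo f (Icc a b) a) v s ∧ ‖f'‖ ≤ v := by
  have ha : a ∈ Icc a b := left_mem_Icc.2 hab
  have hl := lipschitzOnWith_variationOnFromTo hf ha
  rw [← uIcc_of_le hab] at hl
  rw [← restrict_Ico_eq_restrict_Icc, ae_restrict_iff' measurableSet_Ico]
  filter_upwards [hl.absolutelyContinuousOnInterval.ae_differentiableAt] with s hs hsab f' hf'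
  rw [uIcc_of_le hab] at hs
  have hdiff := (hs (Ico_subset_Icc_self hsab)).hasDerivAt
  refine ⟨_, hdiff, norm_le_of_hasDerivAt_of_norm_sub_le hf' hdiff ?_⟩
  filter_upwards [Ioo_mem_nhdsGT hsab.2] with u hu
  exact norm_sub_le_variationOnFromTo_sub hf.locallyBoundedVariationOn ha
    (Ico_subset_Icc_self hsab) ⟨hsab.1.trans hu.1.le, hu.2.le⟩ hu.1.le

lemma eq_univ_of_ordConnected_of_expanding {S : Set ℝ} (hS : S.OrdConnected) (hnt : S.Nontrivial)
    {c : ℝ} (hc : 1 < c)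
    (hexp : ∀ m r, 0 ≤ r → m - r ∈ S → m + r ∈ S → m - c * r ∈ S ∧ m + c * r ∈ S) : S = univ := by
  obtain ⟨s, hs, t, ht, hst⟩ := hnt.exists_lt
  let m := (s + t) / 2
  let r := (t - s) / 2
  have hr0 : 0 < r := half_pos (sub_pos.2 hst)
  have hiter (k : ℕ) : m - c ^ k * r ∈ S ∧ m + c ^ k * r ∈ S := by
    induction k with
    | zero =>
      constructor <;> [convert! hs using 1; convert! ht using 1] <;> simp only [m, r] <;> ring
    | succ k ih =>
      rw [pow_succ', mul_assoc]
      exact hexp m _ (by positivity) ih.1 ih.2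
  refine eq_univ_of_forall fun u => ?_
  obtain ⟨k, hk⟩ := pow_unbounded_of_one_lt (|u - m| / r) hc
  rw [div_lt_iff₀ hr0, abs_lt] at hk
  exact hS.out (hiter k).1 (hiter k).2 ⟨by linarith, by linarith⟩

end RealAnalysis

/-! ### The isoperimetric inequality for lifted curves -/

section Isoperimetric

open scoped RealInnerProductSpace

variable {E : Type*} [NormedAddCommGroup E] [InnerProductSpace ℝ E] {J : E →ₗᵢ[ℝ] E}

/-- `h` is the height of a lift of the Lipschitz curve `z` on `[a, b]`, governed by
`h' = 2⟪z', J z⟫`. If `J` is a skew rotation and `z` is closed, then `h b - h a` is four times the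
area enclosed by `z`. -/
structure IsAreaLift (J : E →ₗᵢ[ℝ] E) (z : ℝ → E) (h : ℝ → ℝ) (a b : ℝ) : Prop where
  lipschitzOnWith : ∃ K, LipschitzOnWith K z (Icc a b)
  absolutelyContinuous : AbsolutelyContinuousOnInterval h a b
  ae_hasDerivAt : ∀ᵐ s ∂volume.restrict (Icc a b),
    ∃ z', HasDerivAt z z' s ∧ HasDerivAt h (2 * ⟪z', J (z s)⟫) s

/-- The calibrating function of the isoperimetric inequality, for a curve `z` with lift `h` and
arc length `l`. It is constant along the circle of length `π / k` that starts from `0` where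
`l = c - π / (2 * k)`. -/
def calibration (k c : ℝ) (l : ℝ → ℝ) (z : ℝ → E) (h : ℝ → ℝ) (s : ℝ) : ℝ :=
  l s - k * (tan (k * (c - l s)) * ‖z s‖ ^ 2) - k * h s

lemma two_mul_inner_add_smul_le (hJ : ∀ z, ⟪z, J z⟫ = 0) (z z' : E) (c k : ℝ) {v : ℝ}
    (hv : ‖z'‖ ≤ v) :
    2 * k * ⟪z', J z + c • z⟫ ≤ v * (1 + k ^ 2 * (1 + c ^ 2) * ‖z‖ ^ 2) := by
  have hnorm : ‖J z + c • z‖ ^ 2 = (1 + c ^ 2) * ‖z‖ ^ 2 := by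
    rw [norm_add_sq_real, J.norm_map, inner_smul_right, real_inner_comm, hJ, norm_smul, mul_pow,
      norm_eq_abs, sq_abs]
    ring
  calc 2 * k * ⟪z', J z + c • z⟫ = 2 * ⟪z', k • (J z + c • z)⟫ := by
        rw [inner_smul_right]; ring
    _ ≤ 2 * (v * ‖k • (J z + c • z)‖) := by
        gcongr
        exact (real_inner_le_norm _ _).trans (by gcongr)
    _ = v * (2 * 1 * ‖k • (J z + c • z)‖) := by ring
    _ ≤ v * (1 ^ 2 + ‖k • (J z + c • z)‖ ^ 2) := by
        gcongr
        · exact (norm_nonneg _).trans hv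
        · exact two_mul_le_add_sq _ _
    _ = v * (1 + k ^ 2 * (1 + c ^ 2) * ‖z‖ ^ 2) := by
        rw [norm_smul, mul_pow, hnorm, norm_eq_abs, sq_abs]; ring

lemma deriv_calibration_nonneg (hJ : ∀ z, ⟪z, J z⟫ = 0) {k c s v : ℝ} {l h : ℝ → ℝ} {z : ℝ → E}
    {z' : E} (hl : HasDerivAt l v s) (hz : HasDerivAt z z' s)
    (hh : HasDerivAt h (2 * ⟪z', J (z s)⟫) s) (hv : ‖z'‖ ≤ v) (hcos : cos (k * (c - l s)) ≠ 0) :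
    0 ≤ deriv (calibration k c l z h) s := by
  set T := tan (k * (c - l s))
  have htan : HasDerivAt (fun s => tan (k * (c - l s))) ((1 + T ^ 2) * (k * -v)) s := by
    have := (hasDerivAt_tan hcos).comp s ((hl.const_sub c).const_mul k)
    rwa [← inv_one_add_tan_sq hcos, one_div, inv_inv] at this
  have hderiv : deriv (calibration k c l z h) s = v - k * ((1 + T ^ 2) * (k * -v) * ‖z s‖ ^ 2 +
      T * (2 * ⟪z s, z'⟫)) - k * (2 * ⟪z', J (z s)⟫) :=
    ((hl.sub ((htan.mul hz.norm_sq).const_mul k)).sub (hh.const_mul k)).deriv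
  have hkey := two_mul_inner_add_smul_le hJ (z s) z' T k hv
  rw [inner_add_right, inner_smul_right] at hkey
  rw [hderiv, real_inner_comm]
  linarith

lemma IsAreaLift.absolutelyContinuous_calibration {z : ℝ → E} {h : ℝ → ℝ} {a b k c : ℝ}
    (hlift : IsAreaLift J z h a b) (hab : a ≤ b) {l : ℝ → ℝ} {C : ℝ≥0}
    (hl : LipschitzOnWith C l (Icc a b)) {θ : ℝ} (hθ : θ < π / 2)
    (hlθ : ∀ s ∈ Icc a b, k * (c - l s) ∈ Icc (-θ) θ) :
    AbsolutelyContinuousOnInterval (calibration k c l z h) a b := by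
  obtain ⟨K, hK⟩ := hlift.lipschitzOnWith
  obtain ⟨Kt, hKt⟩ := exists_lipschitzOnWith_tan hθ
  rw [← uIcc_of_le hab] at hl hlθ hK
  have hl' := hl.absolutelyContinuousOnInterval
  have haff : LipschitzWith (‖k‖₊) fun u => k * (c - u) := by
    refine LipschitzWith.of_dist_le_mul fun x y => ?_
    simp [dist_eq_norm, ← mul_sub, norm_sub_rev]
  have htan := (hKt.comp (haff.comp_lipschitzOnWith hl) hlθ).absolutelyContinuousOnInterval
  have hnorm := (lipschitzWith_one_norm.comp_lipschitzOnWith hK).absolutelyContinuousOnInterval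
  have hcalibration : calibration k c l z h = fun s =>
      l s - k * (tan (k * (c - l s)) * (‖z s‖ * ‖z s‖)) - k * h s := by
    simp only [funext_iff, calibration, sq, implies_true]
  rw [hcalibration]
  exact (hl'.sub ((htan.mul (hnorm.mul hnorm)).const_mul k)).sub
    (hlift.absolutelyContinuous.const_mul k)

lemma IsAreaLift.mul_sub_le_length_of_eq_zero (hJ : ∀ z, ⟪z, J z⟫ = 0) {z : ℝ → E} {h : ℝ → ℝ}
    {a b k : ℝ} (hlift : IsAreaLift J z h a b) (hab : a ≤ b) (ha : z a = 0) (hb : z b = 0)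
    (hk : 0 ≤ k) (hkπ : k * (eVariationOn z (Icc a b)).toReal < π) :
    k * (h b - h a) ≤ (eVariationOn z (Icc a b)).toReal := by
  obtain ⟨C, hC⟩ := hlift.lipschitzOnWith
  set l := variationOnFromTo z (Icc a b) a
  set L := (eVariationOn z (Icc a b)).toReal
  have ha_mem : a ∈ Icc a b := left_mem_Icc.2 hab
  have hbv := hC.locallyBoundedVariationOn
  have hlmono : MonotoneOn l (Icc a b) := variationOnFromTo.monotoneOn hbv ha_mem
  have hl : LipschitzOnWith C l (Icc a b) := lipschitzOnWith_variationOnFromTo hC ha_mem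
  have hla : l a = 0 := variationOnFromTo.self ..
  have hlb : l b = L := by
    simp only [l, L, variationOnFromTo.eq_of_le _ _ hab, inter_self]
  have hangle : ∀ s ∈ Icc a b, k * (L / 2 - l s) ∈ Icc (-(k * L / 2)) (k * L / 2) := by
    intro s hs
    have hl0 : 0 ≤ l s := hla ▸ hlmono ha_mem hs hs.1
    have hlL : l s ≤ L := hlb ▸ hlmono hs (right_mem_Icc.2 hab) hs.2
    constructor <;> nlinarith
  have hderiv : ∀ᵐ s ∂volume.restrict (Icc a b), 0 ≤ deriv (calibration k (L / 2) l z h) s := by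
    filter_upwards [hlift.ae_hasDerivAt, ae_exists_hasDerivAt_variationOnFromTo hC hab,
      ae_restrict_mem measurableSet_Icc] with s ⟨z', hz, hh⟩ hl hs
    obtain ⟨v, hv, hz'v⟩ := hl z' hz
    obtain ⟨hlo, hhi⟩ := hangle s hs
    exact deriv_calibration_nonneg hJ hv hz hh hz'v
      (cos_pos_of_mem_Ioo ⟨by linarith, by linarith⟩).ne'
  have hmono := le_of_ae_deriv_nonneg hab
    (hlift.absolutelyContinuous_calibration hab hl (by linarith) hangle) hderiv
  rw [calibration, calibration, ha, hb, hla, hlb, norm_zero] at hmono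
  linarith

lemma IsAreaLift.sub_const {z : ℝ → E} {h : ℝ → ℝ} {a b : ℝ} (hlift : IsAreaLift J z h a b)
    (hab : a ≤ b) (z₀ : E) :
    IsAreaLift J (fun s => z s - z₀) (fun s => h s - 2 * ⟪J z₀, z s⟫) a b where
  lipschitzOnWith :=
    let ⟨K, hK⟩ := hlift.lipschitzOnWith
    ⟨K, fun s hs u hu => by simpa only [edist_sub_right] using hK hs hu⟩
  absolutelyContinuous := by
    obtain ⟨K, hK⟩ := hlift.lipschitzOnWith
    rw [← uIcc_of_le hab] at hK
    exact hlift.absolutelyContinuous.sub <| AbsolutelyContinuousOnInterval.const_mul 2 <|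
      ((innerSL ℝ (J z₀)).lipschitz.comp_lipschitzOnWith hK).absolutelyContinuousOnInterval
  ae_hasDerivAt := by
    filter_upwards [hlift.ae_hasDerivAt] with s ⟨z', hz, hh⟩
    refine ⟨z', hz.sub_const z₀, ?_⟩
    convert! hh.sub (((innerSL ℝ (J z₀)).hasFDerivAt.comp_hasDerivAt s hz).const_mul 2) using 1
    rw [map_sub, inner_sub_right, innerSL_apply_apply, real_inner_comm z' (J z₀)]
    ring

theorem IsAreaLift.pi_mul_sub_le_length_sq (hJ : ∀ z, ⟪z, J z⟫ = 0) {z : ℝ → E} {h : ℝ → ℝ}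
    {a b : ℝ} (hlift : IsAreaLift J z h a b) (hab : a ≤ b) (hclosed : z a = z b) :
    π * (h b - h a) ≤ (eVariationOn z (Icc a b)).toReal ^ 2 := by
  set L := (eVariationOn z (Icc a b)).toReal with hL
  set Δ := h b - h a
  have hL0 : 0 ≤ L := ENNReal.toReal_nonneg
  have hlength : eVariationOn (fun s => z s - z a) (Icc a b) = eVariationOn z (Icc a b) := by
    simp only [eVariationOn, edist_sub_right]
  have hle (k : ℝ) (hk : 0 ≤ k) (hkL : k * L < π) : k * Δ ≤ L := by
    rw [hL, ← hlength] at hkL ⊢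
    convert! (hlift.sub_const hab (z a)).mul_sub_le_length_of_eq_zero hJ hab (sub_self _)
      (sub_eq_zero.2 hclosed.symm) hk hkL using 2
    simp only [Δ, ← hclosed, sub_sub_sub_cancel_right]
  by_contra! hlt
  have hLlt : L < √(π * Δ) := lt_sqrt_of_sq_lt hlt
  have hpos : 0 < √(π * Δ) := hL0.trans_lt hLlt
  refine (hle (π / √(π * Δ)) (by positivity) ?_).not_gt ?_
  · rw [div_mul_eq_mul_div, div_lt_iff₀ hpos]
    exact mul_lt_mul_of_pos_left hLlt pi_pos
  · rwa [div_mul_eq_mul_div, div_sqrt]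

end Isoperimetric

/-! ### Geodesics of the Heisenberg group -/

section HeisenbergGroup

open scoped RealInnerProductSpace

variable {n : ℕ}

/-- The horizontal layer `ℝ²ⁿ` of `ℍⁿ`, the range of `hproj`. -/
abbrev Plane (n : ℕ) : Type := EuclideanSpace ℝ (Fin n ⊕ Fin n)

/-- The rotation `(x, y) ↦ (y, -x)`. It turns the horizontality condition into
`t' = 2⟪z', J z⟫` and the cocycle of the group law of `ℍⁿ` into `2⟪w, J z⟫`. -/
def quarterTurn (n : ℕ) : Plane n →ₗᵢ[ℝ] Plane n where
  toFun z := WithLp.toLp 2 (Sum.elim (fun j => z (.inr j)) fun j => -z (.inl j))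
  map_add' z w := by ext (j | j) <;> simp [add_comm]
  map_smul' c z := by ext (j | j) <;> simp
  norm_map' z := by simp [EuclideanSpace.norm_eq, Fintype.sum_sum_type, add_comm]

local notation "J" => quarterTurn _

lemma quarterTurn_quarterTurn (z : Plane n) : J (J z) = -z := by
  ext (j | j) <;> simp [quarterTurn]

lemma inner_quarterTurn_self (z : Plane n) : ⟪z, J z⟫ = 0 := by
  simp [quarterTurn, PiLp.inner_apply, Fintype.sum_sum_type, mul_comm]

lemma inner_smul_add_smul_quarterTurn (w : Plane n) (a b c d : ℝ) :
    ⟪a • w + b • J w, J (c • w + d • J w)⟫ = (b * c - a * d) * ‖w‖ ^ 2 := by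
  have hw : ⟪J w, w⟫ = 0 := by rw [real_inner_comm, inner_quarterTurn_self]
  simp only [map_add, map_smul, quarterTurn_quarterTurn, inner_add_left, inner_add_right,
    inner_smul_left, inner_smul_right, inner_neg_right, inner_quarterTurn_self, hw,
    real_inner_self_eq_norm_sq, LinearIsometry.norm_map, conj_trivial]
  ring

lemma norm_smul_add_smul_quarterTurn_sq (w : Plane n) (a b : ℝ) :
    ‖a • w + b • J w‖ ^ 2 = (a ^ 2 + b ^ 2) * ‖w‖ ^ 2 := by
  rw [norm_add_sq_real, inner_smul_left, inner_smul_right, inner_quarterTurn_self, norm_smul,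
    norm_smul, LinearIsometry.norm_map, mul_pow, mul_pow, norm_eq_abs, norm_eq_abs, sq_abs, sq_abs]
  ring

lemma inner_hproj_quarterTurn_hproj (v p : Hpt n) :
    ⟪hproj v, J (hproj p)⟫ = ∑ j, (v.1 j * p.2.1 j - v.2.1 j * p.1 j) := by
  simp [quarterTurn, hproj, PiLp.inner_apply, Fintype.sum_sum_type, sub_eq_add_neg,
    Finset.sum_add_distrib, mul_comm]

/-- The point of `ℍⁿ` with horizontal part `z` and height `t`, for `(z, t)` in `ℝ²ⁿ × ℝ`. -/
def ofCoord (n : ℕ) : (Plane n × ℝ) ≃L[ℝ] Hpt n :=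
  LinearEquiv.toContinuousLinearEquiv
    { toFun v := (fun j => v.1 (.inl j), fun j => v.1 (.inr j), v.2)
      invFun p := (hproj p, p.2.2)
      map_add' _ _ := rfl
      map_smul' _ _ := rfl
      left_inv v := by
        ext1
        · ext (j | j) <;> simp [hproj]
        · rfl
      right_inv _ := rfl }

lemma ofCoord_symm_apply (p : Hpt n) : (ofCoord n).symm p = (hproj p, p.2.2) := rfl

lemma hproj_ofCoord (v : Plane n × ℝ) : hproj (ofCoord n v) = v.1 :=
  congrArg Prod.fst ((ofCoord n).symm_apply_apply v)

/-- The left translate `p * (z, t)` in the group law of `ℍⁿ`. -/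
def leftTranslate (p : Hpt n) (z : Plane n) (t : ℝ) : Hpt n :=
  ofCoord n (hproj p + z, p.2.2 + t + 2 * ⟪z, J (hproj p)⟫)

lemma hproj_leftTranslate (p : Hpt n) (z : Plane n) (t : ℝ) :
    hproj (leftTranslate p z t) = hproj p + z :=
  hproj_ofCoord _

lemma height_leftTranslate (p : Hpt n) (z : Plane n) (t : ℝ) :
    (leftTranslate p z t).2.2 = p.2.2 + t + 2 * ⟪z, J (hproj p)⟫ := rfl

lemma leftTranslate_leftTranslate (p : Hpt n) (z w : Plane n) (t u : ℝ) :
    leftTranslate (leftTranslate p z t) w u = leftTranslate p (z + w) (t + u + 2 * ⟪w, J z⟫) := by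
  rw [leftTranslate, hproj_leftTranslate, height_leftTranslate, leftTranslate, add_assoc, map_add,
    inner_add_left, inner_add_right]
  ring_nf

lemma leftTranslate_zero (p : Hpt n) (t : ℝ) :
    leftTranslate p 0 t = (p.1, p.2.1, p.2.2 + t) := by
  rw [leftTranslate, add_zero, inner_zero_left, mul_zero, add_zero]
  rfl

lemma leftTranslate_zero_zero (p : Hpt n) : leftTranslate p 0 0 = p := by
  rw [leftTranslate_zero, add_zero]

lemma leftTranslate_leftTranslate_zero (p : Hpt n) (z : Plane n) (t u : ℝ) :
    leftTranslate (leftTranslate p z t) 0 u = leftTranslate p z (t + u) := by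
  rw [leftTranslate_leftTranslate, add_zero, inner_zero_left, mul_zero, add_zero]

lemma leftTranslate_zero_leftTranslate (p : Hpt n) (z : Plane n) (t u : ℝ) :
    leftTranslate (leftTranslate p 0 t) z u = leftTranslate p z (t + u) := by
  rw [leftTranslate_leftTranslate, zero_add, map_zero, inner_zero_right, mul_zero, add_zero]

lemma exists_eq_leftTranslate (p q : Hpt n) : ∃ z t, q = leftTranslate p z t := by
  refine ⟨hproj q - hproj p, q.2.2 - p.2.2 - 2 * ⟪hproj q - hproj p, J (hproj p)⟫, ?_⟩
  rw [leftTranslate, add_sub_cancel, sub_sub, add_assoc, sub_add_eq_add_sub]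
  simp [← ofCoord_symm_apply]

lemma IsHorizontal.isAreaLift {γ : ℝ → Hpt n} {a b : ℝ} (hγ : IsHorizontal γ a b) :
    IsAreaLift J (fun s => hproj (γ s)) (fun s => (γ s).2.2) a b := by
  obtain ⟨hab, ⟨K, hK⟩, γ', hderiv, hhor⟩ := hγ
  have hcoord := (ofCoord n).symm.lipschitz.comp_lipschitzOnWith hK
  refine ⟨⟨_, LipschitzWith.prod_fst.comp_lipschitzOnWith hcoord⟩, ?_, ?_⟩
  · rw [← uIcc_of_le hab] at hcoord
    exact (LipschitzWith.prod_snd.comp_lipschitzOnWith hcoord).absolutelyContinuousOnInterval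
  · filter_upwards [hderiv, hhor] with s hs hs'
    have hcoord' := (ofCoord n).symm.hasFDerivAt.comp_hasDerivAt s hs
    refine ⟨hproj (γ' s), hcoord'.fst, ?_⟩
    rw [inner_hproj_quarterTurn_hproj, ← hs']
    exact hcoord'.snd

lemma isHorizontal_leftTranslate (p : Hpt n) {ζ ζ' : ℝ → Plane n} {τ : ℝ → ℝ} {a b : ℝ}
    (hab : a ≤ b) (hζ : ∀ s, HasDerivAt ζ (ζ' s) s) (hζ' : Continuous ζ')
    (hτ : ∀ s, HasDerivAt τ (2 * ⟪ζ' s, J (ζ s)⟫) s) :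
    IsHorizontal (fun s => leftTranslate p (ζ s) (τ s)) a b := by
  have hderiv (s : ℝ) : HasDerivAt (fun s => leftTranslate p (ζ s) (τ s))
      (ofCoord n (ζ' s, 2 * ⟪ζ' s, J (hproj p + ζ s)⟫)) s := by
    have hinner := ((hζ s).inner ℝ (hasDerivAt_const s (J (hproj p)))).const_mul 2
    convert! (ofCoord n).hasFDerivAt.comp_hasDerivAt s (((hζ s).const_add (hproj p)).prodMk
      (((hτ s).const_add p.2.2).add hinner)) using 1
    rw [map_add, inner_add_right, inner_zero_right, zero_add, add_comm, mul_add]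
    rfl
  have hζc : Continuous ζ := continuous_iff_continuousAt.2 fun s => (hζ s).continuousAt
  have hC1 : ContDiff ℝ 1 fun s => leftTranslate p (ζ s) (τ s) := by
    refine contDiff_one_iff_deriv.2 ⟨fun s => (hderiv s).differentiableAt, ?_⟩
    rw [deriv_eq hderiv]
    fun_prop
  refine ⟨hab, hC1.contDiffOn.exists_lipschitzOnWith one_ne_zero (convex_Icc a b) isCompact_Icc,
    _, ae_of_all _ hderiv, ae_of_all _ fun s => ?_⟩
  rw [← inner_hproj_quarterTurn_hproj, hproj_ofCoord, hproj_leftTranslate]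
  rfl

lemma hLength_leftTranslate_le (p : Hpt n) {ζ ζ' : ℝ → Plane n} (τ : ℝ → ℝ) {a b : ℝ}
    (hab : a ≤ b) (hζ : ∀ s, HasDerivAt ζ (ζ' s) s) {C : ℝ≥0} (hC : ∀ s, ‖ζ' s‖ ≤ C) :
    hLength (fun s => leftTranslate p (ζ s) (τ s)) a b ≤ C * ENNReal.ofReal (b - a) := by
  have hlip : LipschitzWith C fun s => hproj p + ζ s :=
    lipschitzWith_of_nnnorm_deriv_le (fun s => ((hζ s).const_add _).differentiableAt) fun s => by
      rw [((hζ s).const_add _).deriv]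
      exact hC s
  simp only [hLength, hproj_leftTranslate]
  simpa only [inter_self] using eVariationOn_inter_Icc_le_of_lipschitzOnWith
    hlip.lipschitzOnWith (left_mem_Icc.2 hab) (right_mem_Icc.2 hab)

lemma isGeodesicOn_of_forall_hLength_le {γ : ℝ → Hpt n} {a b : ℝ} (hγ : IsHorizontal γ a b)
    (hmin : ∀ δ c d, IsHorizontal δ c d → δ c = γ a → δ d = γ b → hLength γ a b ≤ hLength δ c d) :
    IsGeodesicOn γ a b :=
  ⟨hγ, le_antisymm (le_iInf fun δ => le_iInf fun c => le_iInf fun d => le_iInf fun hδ =>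
      le_iInf fun hc => le_iInf fun hd => hmin δ c d hδ hc hd)
    (iInf_le_of_le γ <| iInf_le_of_le a <| iInf_le_of_le b <| iInf_le_of_le hγ <|
      iInf_le_of_le rfl <| iInf_le_of_le rfl le_rfl)⟩

lemma isGeodesicOn_segment (p : Hpt n) (z : Plane n) :
    IsGeodesicOn (fun s : ℝ => leftTranslate p (s • z) 0) (-1) 1 := by
  have hζ (s : ℝ) : HasDerivAt (fun s : ℝ => s • z) z s := by
    convert! (hasDerivAt_id s).smul_const z using 1
    rw [one_smul]
  have hhor := isHorizontal_leftTranslate p (by norm_num : (-1 : ℝ) ≤ 1) hζ continuous_const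
    (τ := fun _ => 0) fun s => by
      simpa only [map_smul, inner_smul_right, inner_quarterTurn_self, mul_zero]
        using hasDerivAt_const s (0 : ℝ)
  refine isGeodesicOn_of_forall_hLength_le hhor fun δ c d hδ hc hd => ?_
  calc hLength (fun s : ℝ => leftTranslate p (s • z) 0) (-1) 1
      ≤ ‖z‖₊ * ENNReal.ofReal (1 - -1) :=
        hLength_leftTranslate_le p _ (by norm_num) hζ fun _ => le_rfl
    _ = edist (hproj (δ d)) (hproj (δ c)) := by
        rw [hd, hc, hproj_leftTranslate, hproj_leftTranslate, edist_add_left,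
          edist_eq_enorm_sub, ← sub_smul, enorm_smul, ← ofReal_norm (1 - -1 : ℝ), mul_comm,
          norm_of_nonneg (by norm_num), enorm_eq_nnnorm]
    _ ≤ hLength δ c d := eVariationOn.edist_le _ (right_mem_Icc.2 hδ.1) (left_mem_Icc.2 hδ.1)

/-- The circle through `0` with centre `w`, parametrised by the angle `φ` seen from the centre. -/
def arcPoint (w : Plane n) (φ : ℝ) : Plane n := (1 - cos φ) • w + (-sin φ) • J w

/-- The height of the horizontal lift, starting at the origin, of the circle `arcPoint w`. -/
def arcHeight (w : Plane n) (φ : ℝ) : ℝ := 2 * ‖w‖ ^ 2 * (φ - sin φ)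

lemma arcPoint_zero (w : Plane n) : arcPoint w 0 = 0 := by
  simp [arcPoint]

lemma arcPoint_two_pi (w : Plane n) : arcPoint w (2 * π) = 0 := by
  simp [arcPoint]

lemma arcPoint_neg (w : Plane n) (φ : ℝ) : arcPoint (-w) φ = -arcPoint w φ := by
  simp only [arcPoint, map_neg, smul_neg, neg_add]

lemma arcHeight_zero (w : Plane n) : arcHeight w 0 = 0 := by
  simp [arcHeight]

lemma arcHeight_two_pi (w : Plane n) : arcHeight w (2 * π) = 4 * π * ‖w‖ ^ 2 := by
  rw [arcHeight, sin_two_pi]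
  ring

lemma arcHeight_neg (w : Plane n) (φ : ℝ) : arcHeight (-w) φ = arcHeight w φ := by
  rw [arcHeight, arcHeight, norm_neg]

lemma hasDerivAt_arcPoint (w : Plane n) (φ : ℝ) :
    HasDerivAt (arcPoint w) (sin φ • w + (-cos φ) • J w) φ := by
  convert! (((hasDerivAt_cos φ).const_sub 1).smul_const w).add
    ((hasDerivAt_sin φ).neg.smul_const (J w)) using 1
  rw [neg_neg]

lemma hasDerivAt_arcHeight (w : Plane n) (φ : ℝ) :
    HasDerivAt (arcHeight w) (2 * ⟪sin φ • w + (-cos φ) • J w, J (arcPoint w φ)⟫) φ := by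
  convert! ((hasDerivAt_id φ).sub (hasDerivAt_sin φ)).const_mul (2 * ‖w‖ ^ 2) using 1
  rw [arcPoint, inner_smul_add_smul_quarterTurn]
  linear_combination 2 * ‖w‖ ^ 2 * sin_sq_add_cos_sq φ

lemma isGeodesicOn_arc (p : Hpt n) (w : Plane n) :
    IsGeodesicOn (fun φ => leftTranslate p (arcPoint w φ) (arcHeight w φ)) 0 (2 * π) := by
  have hspeed (φ : ℝ) : ‖sin φ • w + (-cos φ) • J w‖ ≤ ‖w‖₊ := by
    refine le_of_sq_le_sq ?_ (norm_nonneg w)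
    rw [norm_smul_add_smul_quarterTurn_sq, neg_sq, sin_sq_add_cos_sq, one_mul, coe_nnnorm]
  refine isGeodesicOn_of_forall_hLength_le (isHorizontal_leftTranslate p two_pi_pos.le
    (hasDerivAt_arcPoint w) (by fun_prop) (hasDerivAt_arcHeight w)) fun δ c d hδ hc hd => ?_
  have hlift := hδ.isAreaLift
  have hclosed : hproj (δ c) = hproj (δ d) := by
    rw [hc, hd, hproj_leftTranslate, hproj_leftTranslate, arcPoint_zero, arcPoint_two_pi]
  have hheight : (δ d).2.2 - (δ c).2.2 = 4 * π * ‖w‖ ^ 2 := by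
    rw [hc, hd, height_leftTranslate, height_leftTranslate, arcPoint_zero, arcPoint_two_pi,
      arcHeight_zero, arcHeight_two_pi]
    ring
  have hiso := hlift.pi_mul_sub_le_length_sq inner_quarterTurn_self hδ.1 hclosed
  calc _ ≤ ‖w‖₊ * ENNReal.ofReal (2 * π - 0) :=
        hLength_leftTranslate_le p _ two_pi_pos.le (hasDerivAt_arcPoint w) hspeed
    _ = ENNReal.ofReal (‖w‖ * (2 * π)) := by
        rw [sub_zero, ENNReal.ofReal_mul (norm_nonneg w), ofReal_norm, enorm_eq_nnnorm]
    _ ≤ hLength δ c d := by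
        refine ENNReal.ofReal_le_of_le_toReal (le_of_sq_le_sq ?_ ENNReal.toReal_nonneg)
        calc (‖w‖ * (2 * π)) ^ 2 = π * (4 * π * ‖w‖ ^ 2) := by ring
          _ ≤ (hLength δ c d).toReal ^ 2 := hheight ▸ hiso

/-! ### Geodetically convex sets -/

variable {A : Set (Hpt n)}

lemma GeodConvexSet.mem_of_antipodal_mem (hA : GeodConvexSet A) {p : Hpt n} {z : Plane n} {t : ℝ}
    (hneg : leftTranslate p (-z) t ∈ A) (hpos : leftTranslate p z t ∈ A) :
    leftTranslate p 0 t ∈ A := by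
  have hbase (w : Plane n) : leftTranslate p w t = leftTranslate (leftTranslate p 0 t) w 0 := by
    rw [leftTranslate_zero_leftTranslate, add_zero]
  rw [hbase] at hneg hpos ⊢
  simpa using hA _ hneg _ hpos _ _ _ (isGeodesicOn_segment _ z) (by simp) (by simp)
    0 ⟨by norm_num, by norm_num⟩

lemma GeodConvexSet.arc_mem (hA : GeodConvexSet A) {p : Hpt n} {w : Plane n} (hp : p ∈ A)
    (htop : leftTranslate p 0 (4 * π * ‖w‖ ^ 2) ∈ A) {φ : ℝ} (hφ : φ ∈ Icc 0 (2 * π)) :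
    leftTranslate p (arcPoint w φ) (arcHeight w φ) ∈ A := by
  refine hA p hp _ htop _ _ _ (isGeodesicOn_arc p w) ?_ ?_ φ hφ
  · simp only [arcPoint_zero, arcHeight_zero, leftTranslate_zero_zero]
  · simp only [arcPoint_two_pi, arcHeight_two_pi]

lemma exists_arcHeight_eq (w : Plane n) {t : ℝ} (ht : t ∈ Icc 0 (4 * π * ‖w‖ ^ 2)) :
    ∃ φ ∈ Icc 0 (2 * π), arcHeight w φ = t := by
  have hcont : Continuous (arcHeight w) :=
    continuous_iff_continuousAt.2 fun φ => (hasDerivAt_arcHeight w φ).continuousAt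
  refine intermediate_value_Icc two_pi_pos.le hcont.continuousOn ?_
  rwa [arcHeight_two_pi, arcHeight, sin_zero, sub_zero, mul_zero]

lemma exists_mul_norm_sq_eq [NeZero n] {c t : ℝ} (hc : 0 < c) (ht : 0 ≤ t) :
    ∃ w : Plane n, c * ‖w‖ ^ 2 = t := by
  obtain ⟨w, hw⟩ := exists_norm_eq (Plane n) (sqrt_nonneg (t / c))
  exact ⟨w, by rw [hw, sq_sqrt (by positivity), mul_div_cancel₀ _ hc.ne']⟩

/-- The heights, relative to `p`, of the points of `A` on the vertical line through `p`. -/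
def verticalFibre (A : Set (Hpt n)) (p : Hpt n) : Set ℝ := {t | leftTranslate p 0 t ∈ A}

lemma mem_verticalFibre {p : Hpt n} {t : ℝ} : t ∈ verticalFibre A p ↔ leftTranslate p 0 t ∈ A :=
  Iff.rfl

-- The circles with centres `w` and `-w` have antipodal points at equal heights.
lemma GeodConvexSet.ordConnected_verticalFibre [NeZero n] (hA : GeodConvexSet A) (p : Hpt n) :
    (verticalFibre A p).OrdConnected := by
  refine ⟨fun t₁ ht₁ t₂ ht₂ u hu => ?_⟩
  rw [mem_verticalFibre] at ht₁ ht₂ ⊢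
  obtain ⟨w, hw⟩ := exists_mul_norm_sq_eq (n := n) (by positivity : 0 < 4 * π)
    (sub_nonneg.2 (hu.1.trans hu.2))
  have htop : leftTranslate (leftTranslate p 0 t₁) 0 (4 * π * ‖w‖ ^ 2) ∈ A := by
    rwa [leftTranslate_leftTranslate_zero, hw, add_sub_cancel]
  obtain ⟨φ, hφ, hheight⟩ := exists_arcHeight_eq w (t := u - t₁)
    ⟨sub_nonneg.2 hu.1, hw ▸ sub_le_sub_right hu.2 t₁⟩
  have hpos := hA.arc_mem ht₁ htop hφ
  have hneg := hA.arc_mem (w := -w) ht₁ (by rwa [norm_neg]) hφ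
  rw [arcPoint_neg, arcHeight_neg] at hneg
  have hmem := hA.mem_of_antipodal_mem hneg hpos
  rwa [leftTranslate_leftTranslate_zero, hheight, add_sub_cancel] at hmem

lemma GeodConvexSet.quarterArc_mem (hA : GeodConvexSet A) {p : Hpt n} {w : Plane n} (hp : p ∈ A)
    (htop : leftTranslate p 0 (4 * π * ‖w‖ ^ 2) ∈ A) {σ : ℝ} (hσ : σ = 1 ∨ σ = -1) :
    leftTranslate p (w + σ • J w) ((2 * π + σ * (π + 2)) * ‖w‖ ^ 2) ∈ A := by
  have hcos : cos (π + σ * (π / 2)) = 0 := by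
    rcases hσ with rfl | rfl <;> simp [cos_add]
  have hsin : sin (π + σ * (π / 2)) = -σ := by
    rcases hσ with rfl | rfl <;> simp [sin_add]
  have hmem : π + σ * (π / 2) ∈ Icc 0 (2 * π) := by
    rcases hσ with rfl | rfl <;> constructor <;> linarith [pi_pos]
  convert hA.arc_mem hp htop hmem using 2
  · rw [arcPoint, hcos, hsin, sub_zero, one_smul, neg_neg]
  · rw [arcHeight, hsin]
    ring

-- `w + σ J w` lies on the circles with centres `w` and `σ J w`, with two different lifted heights.
lemma GeodConvexSet.leftTranslate_add_smul_quarterTurn_mem [NeZero n] (hA : GeodConvexSet A)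
    {p : Hpt n} {w : Plane n} (hp : p ∈ A) (htop : leftTranslate p 0 (4 * π * ‖w‖ ^ 2) ∈ A)
    {σ τ : ℝ} (hσ : σ = 1 ∨ σ = -1) (hτ : |τ| ≤ π + 2) :
    leftTranslate p (w + σ • J w) ((2 * π + τ) * ‖w‖ ^ 2) ∈ A := by
  have hσsq : σ * σ = 1 := by rcases hσ with rfl | rfl <;> norm_num
  have hnorm : ‖σ • J w‖ = ‖w‖ := by
    rcases hσ with rfl | rfl <;> simp
  have hturn : σ • J w + -σ • J (σ • J w) = w + σ • J w := by
    rw [map_smul, quarterTurn_quarterTurn, neg_smul, smul_neg, smul_neg, neg_neg, smul_smul, hσsq,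
      one_smul, add_comm]
  have hfibre (t : ℝ) : leftTranslate (leftTranslate p (w + σ • J w) 0) 0 t
      = leftTranslate p (w + σ • J w) t := by
    rw [leftTranslate_leftTranslate_zero, zero_add]
  have h₁ := hA.quarterArc_mem hp htop hσ
  have h₂ := hA.quarterArc_mem (w := σ • J w) hp (by rwa [hnorm]) (σ := -σ)
    (by rcases hσ with rfl | rfl <;> simp)
  rw [hturn, hnorm] at h₂
  rw [← hfibre, ← mem_verticalFibre] at h₁ h₂ ⊢
  have hOC := hA.ordConnected_verticalFibre (leftTranslate p (w + σ • J w) 0)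
  rw [abs_le] at hτ
  refine hOC.uIcc_subset h₁ h₂ ?_
  rcases hσ with rfl | rfl
  · refine Icc_subset_uIcc' ⟨?_, ?_⟩ <;> gcongr <;> linarith
  · refine Icc_subset_uIcc ⟨?_, ?_⟩ <;> gcongr <;> linarith

-- A quarter arc, with centre `(σ / 2) J w`, of a second bubble based over `w + σ J w`.
lemma GeodConvexSet.secondQuarterArc_mem [NeZero n] (hA : GeodConvexSet A) {p : Hpt n} {w : Plane n}
    (hp : p ∈ A) (htop : leftTranslate p 0 (4 * π * ‖w‖ ^ 2) ∈ A) {σ : ℝ} (hσ : σ = 1 ∨ σ = -1) :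
    leftTranslate p ((1 / 2 : ℝ) • w + (3 / 2 * σ) • J w)
      ((2 * π + σ * (3 * π / 4 + 9 / 2)) * ‖w‖ ^ 2) ∈ A := by
  have hσsq : σ ^ 2 = 1 := by rcases hσ with rfl | rfl <;> norm_num
  have hnorm : ‖(σ / 2) • J w‖ ^ 2 = ‖w‖ ^ 2 / 4 := by
    rw [norm_smul, LinearIsometry.norm_map, mul_pow, norm_eq_abs, sq_abs, div_pow, hσsq]
    ring
  have hchord : (σ / 2) • J w + σ • J ((σ / 2) • J w) = (-1 / 2 : ℝ) • w + (σ / 2) • J w := by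
    rw [map_smul, quarterTurn_quarterTurn, smul_neg, smul_neg, smul_smul, ← mul_div_assoc, ← sq,
      hσsq]
    module
  have hbase {ε : ℝ} (hε : ε = 1 ∨ ε = -1) :
      leftTranslate p (w + σ • J w) ((2 * π + (σ * (π / 2 + 2) + ε * (π / 2))) * ‖w‖ ^ 2) ∈ A :=
    hA.leftTranslate_add_smul_quarterTurn_mem hp htop hσ <| abs_le.2 <| by
      rcases hσ with rfl | rfl <;> rcases hε with rfl | rfl <;> constructor <;> linarith [pi_pos]
  have hend := hA.quarterArc_mem (w := (σ / 2) • J w) (hbase (.inr rfl)) (by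
    convert hbase (.inl rfl) using 1
    rw [leftTranslate_leftTranslate_zero, hnorm]
    ring_nf) hσ
  have hinner := inner_smul_add_smul_quarterTurn w (-1 / 2) (σ / 2) 1 σ
  rw [one_smul] at hinner
  rw [leftTranslate_leftTranslate, hchord, hinner, hnorm] at hend
  convert hend using 2
  · module
  · ring

lemma GeodConvexSet.expandedEndpoint_mem [NeZero n] (hA : GeodConvexSet A) {p : Hpt n} {w : Plane n}
    (hp : p ∈ A) (htop : leftTranslate p 0 (4 * π * ‖w‖ ^ 2) ∈ A) {σ : ℝ} (hσ : σ = 1 ∨ σ = -1) :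
    leftTranslate p 0 ((2 * π + σ * (3 * π / 4 + 9 / 2)) * ‖w‖ ^ 2) ∈ A := by
  refine hA.mem_of_antipodal_mem ?_ (hA.secondQuarterArc_mem hp htop hσ)
  have hneg := hA.secondQuarterArc_mem (w := -w) hp (by rwa [norm_neg]) hσ
  rwa [norm_neg, map_neg, smul_neg, smul_neg, ← neg_add] at hneg

theorem GeodConvexSet.verticalFibre_eq_univ [NeZero n] (hA : GeodConvexSet A) {p : Hpt n}
    (hnt : (verticalFibre A p).Nontrivial) : verticalFibre A p = univ := by
  have hc : 1 < 3 / 8 + 9 / (4 * π) := by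
    rw [← sub_lt_iff_lt_add', lt_div_iff₀ (by positivity)]
    linarith [pi_lt_d2]
  refine eq_univ_of_ordConnected_of_expanding (hA.ordConnected_verticalFibre p) hnt hc
    fun m r hr hbot htop => ?_
  simp only [mem_verticalFibre] at hbot htop ⊢
  obtain ⟨w, hw⟩ := exists_mul_norm_sq_eq (n := n) two_pi_pos hr
  have hexpanded {σ : ℝ} (hσ : σ = 1 ∨ σ = -1) :
      leftTranslate p 0 (m + σ * ((3 / 8 + 9 / (4 * π)) * r)) ∈ A := by
    have htop' : leftTranslate (leftTranslate p 0 (m - r)) 0 (4 * π * ‖w‖ ^ 2) ∈ A := by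
      convert htop using 1
      rw [leftTranslate_leftTranslate_zero, ← hw]
      ring_nf
    convert hA.expandedEndpoint_mem hbot htop' hσ using 1
    rw [leftTranslate_leftTranslate_zero, ← hw]
    congr 1
    field_simp
    ring
  constructor
  · simpa only [neg_one_mul, ← sub_eq_add_neg] using hexpanded (.inr rfl)
  · simpa only [one_mul] using hexpanded (.inl rfl)

theorem GeodConvexSet.eq_univ_of_verticalFibre_eq_univ (hA : GeodConvexSet A) {p : Hpt n}
    (hfibre : verticalFibre A p = univ) : A = univ := by
  refine eq_univ_of_forall fun q => ?_
  have hmem (t : ℝ) : leftTranslate p 0 t ∈ A := eq_univ_iff_forall.1 hfibre t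
  obtain ⟨z, t, rfl⟩ := exists_eq_leftTranslate p q
  set w := (1 / 2 : ℝ) • z
  have hhalf := hA.arc_mem (w := w) (hmem (t - arcHeight w π))
    (by rw [leftTranslate_leftTranslate_zero]; exact hmem _)
    (φ := π) ⟨pi_pos.le, by linarith [pi_pos]⟩
  have hz : arcPoint w π = z := by
    rw [arcPoint, cos_pi, sin_pi, neg_zero, zero_smul, add_zero, smul_smul]
    norm_num
  rwa [hz, leftTranslate_zero_leftTranslate, sub_add_cancel] at hhalf

end HeisenbergGroup

/-- Any geodetically convex set containing two distinct points on a line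
parallel to the `t`-axis is the whole space `ℍⁿ`. -/
theorem stmt_1 (n : ℕ) (hn : 1 ≤ n) (x y : Fin n → ℝ) (t₁ t₂ : ℝ) (ht : t₁ ≠ t₂)
    (A : Set (Hpt n)) (hA : GeodConvexSet A)
    (hp : ((x, y, t₁) : Hpt n) ∈ A) (hq : ((x, y, t₂) : Hpt n) ∈ A) :
    A = Set.univ := by
  have : NeZero n := ⟨Nat.one_le_iff_ne_zero.1 hn⟩
  have hmem (t : ℝ) : t ∈ verticalFibre A (x, y, 0) ↔ (x, y, t) ∈ A := by
    rw [mem_verticalFibre, leftTranslate_zero, zero_add]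
  have hfibre : verticalFibre A (x, y, 0) = univ :=
    hA.verticalFibre_eq_univ ⟨t₁, (hmem t₁).2 hp, t₂, (hmem t₂).2 hq, ht⟩
  exact hA.eq_univ_of_verticalFibre_eq_univ hfibre
end
end

section
/- Let n ≥ 1, T₀ > 0, and A = {(0,0,0), (0,0,T₀)} ⊆ ℍ^n. For every m ≥ 1, the set G^m(A) is invariant under the reflection about the hyperplane t = T₀/2, i.e., under the map (x,y,t) ↦ (x,y,T₀−t). -/
open MeasureTheory Set Real
open scoped ENNReal NNReal

noncomputable section

/-!
Write `z = x + iy`. The map `(z, t) ↦ (z, T - t)` is not an isometry of `ℍⁿ`, because it reverses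
`dt` but not the form `2 ∑ⱼ (yⱼ dxⱼ - xⱼ dyⱼ)`. The map `(z, t) ↦ (e^{2iθⱼ} z̄ⱼ, T - t)` reverses
both, so it is an isometry and preserves `G^m(A)` whenever it preserves `A`. Given a single point
`(z, t)` of `G^m(A)`, the choice `θⱼ = arg zⱼ` makes this isometry fix `z`, hence send the point
to `(z, T - t)`.
-/

/-- The vector `v` at the point `p` lies in the kernel of the contact form
`dt - 2 ∑ⱼ (yⱼ dxⱼ - xⱼ dyⱼ)`, i.e. it is an admissible velocity of a horizontal curve at `p`. -/
def IsHorizontalVector {n : ℕ} (p v : Hpt n) : Prop :=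
  v.2.2 = 2 * ∑ j, (v.1 j * p.2.1 j - v.2.1 j * p.1 j)

/-- An affine automorphism of `ℍⁿ` that preserves the horizontal distribution and the Euclidean
distance between projections to the `z`-plane, hence the horizontal curves and their lengths. -/
structure IsHorizontalIsometry {n : ℕ} (Φ : Hpt n ≃ᵃ[ℝ] Hpt n) : Prop where
  isHorizontalVector_iff (p v : Hpt n) :
    IsHorizontalVector (Φ p) (Φ.linear v) ↔ IsHorizontalVector p v
  edist_hproj (p q : Hpt n) : edist (hproj (Φ p)) (hproj (Φ q)) = edist (hproj p) (hproj q)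

theorem ccDist_le_hLength {n : ℕ} {γ : ℝ → Hpt n} {a b : ℝ} (hγ : IsHorizontal γ a b) :
    ccDist (γ a) (γ b) ≤ hLength γ a b :=
  iInf_le_of_le γ <| iInf_le_of_le a <| iInf_le_of_le b <|
    iInf_le_of_le hγ <| iInf_le_of_le rfl <| iInf_le_of_le rfl le_rfl

namespace IsHorizontalIsometry

variable {n : ℕ} {Φ : Hpt n ≃ᵃ[ℝ] Hpt n} {γ : ℝ → Hpt n} {a b : ℝ}

theorem symm (hΦ : IsHorizontalIsometry Φ) : IsHorizontalIsometry Φ.symm where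
  isHorizontalVector_iff p v := by
    rw [← hΦ.isHorizontalVector_iff, AffineEquiv.apply_symm_apply, AffineEquiv.linear_symm,
      LinearEquiv.apply_symm_apply]
  edist_hproj p q := by
    rw [← hΦ.edist_hproj, AffineEquiv.apply_symm_apply, AffineEquiv.apply_symm_apply]

theorem isHorizontal_comp (hΦ : IsHorizontalIsometry Φ) (hγ : IsHorizontal γ a b) :
    IsHorizontal (Φ ∘ γ) a b := by
  obtain ⟨hab, ⟨K, hK⟩, γ', hderiv, hhor⟩ := hγ
  obtain ⟨C, hC⟩ := Φ.toAffineMap.lipschitzWith_of_finiteDimensional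
  refine ⟨hab, ⟨C * K, hC.comp_lipschitzOnWith hK⟩, fun s => Φ.linear (γ' s), ?_, ?_⟩
  · filter_upwards [hderiv] with s hs
    exact Φ.toContinuousAffineEquiv.toContinuousAffineMap.hasFDerivAt.comp_hasDerivAt s hs
  · filter_upwards [hhor] with s hs
    exact (hΦ.isHorizontalVector_iff (γ s) (γ' s)).2 hs

theorem hLength_comp (hΦ : IsHorizontalIsometry Φ) (γ : ℝ → Hpt n) (a b : ℝ) :
    hLength (Φ ∘ γ) a b = hLength γ a b := by
  simp only [hLength, eVariationOn, Function.comp_apply, hΦ.edist_hproj]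

theorem ccDist_map_le (hΦ : IsHorizontalIsometry Φ) (p q : Hpt n) :
    ccDist (Φ p) (Φ q) ≤ ccDist p q := by
  refine le_iInf fun γ => le_iInf fun a => le_iInf fun b => le_iInf fun hγ => ?_
  refine le_iInf fun hp => le_iInf fun hq => ?_
  subst hp hq
  exact (ccDist_le_hLength (hΦ.isHorizontal_comp hγ)).trans_eq (hΦ.hLength_comp γ a b)

theorem ccDist_map (hΦ : IsHorizontalIsometry Φ) (p q : Hpt n) :
    ccDist (Φ p) (Φ q) = ccDist p q := by
  refine (hΦ.ccDist_map_le p q).antisymm ?_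
  simpa only [AffineEquiv.symm_apply_apply] using hΦ.symm.ccDist_map_le (Φ p) (Φ q)

theorem isGeodesicOn_comp (hΦ : IsHorizontalIsometry Φ) (hγ : IsGeodesicOn γ a b) :
    IsGeodesicOn (Φ ∘ γ) a b :=
  ⟨hΦ.isHorizontal_comp hγ.1,
    (hΦ.hLength_comp γ a b).trans (hγ.2.trans (hΦ.ccDist_map _ _).symm)⟩

theorem image_geodJoin_subset (hΦ : IsHorizontalIsometry Φ) (S : Set (Hpt n)) :
    Φ '' geodJoin S ⊆ geodJoin (Φ '' S) := by
  rintro _ ⟨_, ⟨_, hp, _, hq, γ, a, b, hγ, rfl, rfl, s, hs, rfl⟩, rfl⟩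
  exact ⟨_, mem_image_of_mem Φ hp, _, mem_image_of_mem Φ hq, Φ ∘ γ, a, b,
    hΦ.isGeodesicOn_comp hγ, rfl, rfl, s, hs, rfl⟩

theorem image_geodJoin (hΦ : IsHorizontalIsometry Φ) (S : Set (Hpt n)) :
    Φ '' geodJoin S = geodJoin (Φ '' S) := by
  refine (hΦ.image_geodJoin_subset S).antisymm fun p hp => ⟨Φ.symm p, ?_, Φ.apply_symm_apply p⟩
  have hsymm : Φ.symm p ∈ geodJoin (Φ.symm '' (Φ '' S)) :=
    hΦ.symm.image_geodJoin_subset _ (mem_image_of_mem _ hp)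
  rwa [show Φ.symm '' (Φ '' S) = S from Φ.toEquiv.symm_image_image S] at hsymm

theorem image_Gm (hΦ : IsHorizontalIsometry Φ) (A : Set (Hpt n)) :
    ∀ m, Φ '' Gm A m = Gm (Φ '' A) m
  | 0 => rfl
  | m + 1 => by rw [Gm, hΦ.image_geodJoin, hΦ.image_Gm A m, Gm]

end IsHorizontalIsometry

theorem edist_hproj_eq {n : ℕ} (p q : Hpt n) :
    edist (hproj p) (hproj q) =
      ENNReal.ofReal √(∑ j, ((p.1 j - q.1 j) ^ 2 + (p.2.1 j - q.2.1 j) ^ 2)) := by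
  simp [edist_dist, EuclideanSpace.dist_eq, hproj, Real.dist_eq, sq_abs, Finset.sum_add_distrib]

/-- The linear involution `(z, t) ↦ (e^{2iθⱼ} z̄ⱼ, -t)` of `ℍⁿ`. On the `z`-plane it is the
reflection fixing the Lagrangian subspace `∏ⱼ e^{iθⱼ} ℝ`. -/
def lagrangianReflectionLinear {n : ℕ} (θ : Fin n → ℝ) : Hpt n →ₗ[ℝ] Hpt n where
  toFun p :=
    (fun j => cos (2 * θ j) * p.1 j + sin (2 * θ j) * p.2.1 j,
      fun j => sin (2 * θ j) * p.1 j - cos (2 * θ j) * p.2.1 j, -p.2.2)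
  map_add' p q := by
    ext j <;> simp only [Prod.fst_add, Prod.snd_add, Pi.add_apply] <;> ring
  map_smul' r p := by
    ext j <;> simp only [Prod.smul_fst, Prod.smul_snd, Pi.smul_apply, smul_eq_mul,
      RingHom.id_apply] <;> ring

theorem lagrangianReflectionLinear_apply {n : ℕ} (θ : Fin n → ℝ) (p : Hpt n) :
    lagrangianReflectionLinear θ p =
      (fun j => cos (2 * θ j) * p.1 j + sin (2 * θ j) * p.2.1 j,
        fun j => sin (2 * θ j) * p.1 j - cos (2 * θ j) * p.2.1 j, -p.2.2) :=
  rfl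

theorem lagrangianReflectionLinear_involutive {n : ℕ} (θ : Fin n → ℝ) :
    Function.Involutive (lagrangianReflectionLinear θ) := by
  intro p
  ext j <;> simp only [lagrangianReflectionLinear_apply]
  · linear_combination p.1 j * cos_sq_add_sin_sq (2 * θ j)
  · linear_combination p.2.1 j * cos_sq_add_sin_sq (2 * θ j)
  · exact neg_neg p.2.2

/-- The affine automorphism `(z, t) ↦ (e^{2iθⱼ} z̄ⱼ, T - t)` of `ℍⁿ`, the horizontal isometry used
in place of the vertical reflection `(z, t) ↦ (z, T - t)`. -/
def lagrangianReflection {n : ℕ} (θ : Fin n → ℝ) (T : ℝ) : Hpt n ≃ᵃ[ℝ] Hpt n :=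
  (LinearEquiv.ofInvolutive (lagrangianReflectionLinear θ)
      (lagrangianReflectionLinear_involutive θ)).toAffineEquiv.trans
    (AffineEquiv.constVAdd ℝ (Hpt n) (0, 0, T))

section LagrangianReflection

variable {n : ℕ} (θ : Fin n → ℝ) (T : ℝ)

theorem lagrangianReflection_apply (p : Hpt n) :
    lagrangianReflection θ T p =
      (fun j => cos (2 * θ j) * p.1 j + sin (2 * θ j) * p.2.1 j,
        fun j => sin (2 * θ j) * p.1 j - cos (2 * θ j) * p.2.1 j, T - p.2.2) := by
  ext j
  · exact zero_add _
  · exact zero_add _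
  · exact (sub_eq_add_neg T p.2.2).symm

theorem lagrangianReflection_linear_apply (v : Hpt n) :
    (lagrangianReflection θ T).linear v = lagrangianReflectionLinear θ v :=
  rfl

theorem isHorizontalVector_lagrangianReflection_iff (p v : Hpt n) :
    IsHorizontalVector (lagrangianReflection θ T p) ((lagrangianReflection θ T).linear v) ↔
      IsHorizontalVector p v := by
  have antisymplectic :
      ∑ j, ((cos (2 * θ j) * v.1 j + sin (2 * θ j) * v.2.1 j) *
            (sin (2 * θ j) * p.1 j - cos (2 * θ j) * p.2.1 j) -
          (sin (2 * θ j) * v.1 j - cos (2 * θ j) * v.2.1 j) *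
            (cos (2 * θ j) * p.1 j + sin (2 * θ j) * p.2.1 j)) =
        -∑ j, (v.1 j * p.2.1 j - v.2.1 j * p.1 j) := by
    rw [← Finset.sum_neg_distrib]
    refine Finset.sum_congr rfl fun j _ => ?_
    linear_combination (v.2.1 j * p.1 j - v.1 j * p.2.1 j) * cos_sq_add_sin_sq (2 * θ j)
  simp only [IsHorizontalVector, lagrangianReflection_apply, lagrangianReflection_linear_apply,
    lagrangianReflectionLinear_apply]
  rw [antisymplectic, mul_neg, neg_inj]

theorem edist_hproj_lagrangianReflection (p q : Hpt n) :
    edist (hproj (lagrangianReflection θ T p)) (hproj (lagrangianReflection θ T q)) =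
      edist (hproj p) (hproj q) := by
  simp only [edist_hproj_eq, lagrangianReflection_apply]
  congr 2
  refine Finset.sum_congr rfl fun j _ => ?_
  linear_combination
    ((p.1 j - q.1 j) ^ 2 + (p.2.1 j - q.2.1 j) ^ 2) * cos_sq_add_sin_sq (2 * θ j)

theorem isHorizontalIsometry_lagrangianReflection :
    IsHorizontalIsometry (lagrangianReflection θ T) :=
  ⟨isHorizontalVector_lagrangianReflection_iff θ T, edist_hproj_lagrangianReflection θ T⟩

theorem exists_lagrangianReflection_eq (p : Hpt n) :
    ∃ θ : Fin n → ℝ, lagrangianReflection θ T p = (p.1, p.2.1, T - p.2.2) := by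
  let z (j : Fin n) : ℂ := ⟨p.1 j, p.2.1 j⟩
  have hx (j : Fin n) : p.1 j = ‖z j‖ * cos (z j).arg := (Complex.norm_mul_cos_arg (z j)).symm
  have hy (j : Fin n) : p.2.1 j = ‖z j‖ * sin (z j).arg := (Complex.norm_mul_sin_arg (z j)).symm
  refine ⟨fun j => (z j).arg, ?_⟩
  rw [lagrangianReflection_apply]
  ext j
  · calc cos (2 * (z j).arg) * p.1 j + sin (2 * (z j).arg) * p.2.1 j
        = ‖z j‖ * cos (2 * (z j).arg - (z j).arg) := by rw [cos_sub, hx, hy]; ring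
      _ = p.1 j := by rw [hx]; ring_nf
  · calc sin (2 * (z j).arg) * p.1 j - cos (2 * (z j).arg) * p.2.1 j
        = ‖z j‖ * sin (2 * (z j).arg - (z j).arg) := by rw [sin_sub, hx, hy]; ring
      _ = p.2.1 j := by rw [hy]; ring_nf
  · rfl

theorem lagrangianReflection_image_pair :
    lagrangianReflection θ T '' {(0, 0, 0), (0, 0, T)} = {(0, 0, 0), (0, 0, T)} := by
  have swap_zero : lagrangianReflection θ T (0, 0, 0) = (0, 0, T) := by
    ext <;> simp [lagrangianReflection_apply]
  have swap_T : lagrangianReflection θ T (0, 0, T) = (0, 0, 0) := by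
    ext <;> simp [lagrangianReflection_apply]
  rw [image_pair, swap_zero, swap_T, pair_comm]

end LagrangianReflection

theorem stmt_8_general {n : ℕ} {T : ℝ} {A : Set (Hpt n)}
    (hA : ∀ θ, lagrangianReflection θ T '' A = A) (m : ℕ) :
    (fun p : Hpt n => (p.1, p.2.1, T - p.2.2)) '' Gm A m = Gm A m := by
  have hmem (p : Hpt n) (hp : p ∈ Gm A m) : (p.1, p.2.1, T - p.2.2) ∈ Gm A m := by
    obtain ⟨θ, hθ⟩ := exists_lagrangianReflection_eq T p
    rw [← hθ, ← hA θ, ← (isHorizontalIsometry_lagrangianReflection θ T).image_Gm]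
    exact mem_image_of_mem _ hp
  refine (image_subset_iff.2 hmem).antisymm fun p hp => ⟨_, hmem p hp, ?_⟩
  simp only [sub_sub_cancel]

/-- Each `G^m(A)` is invariant under the reflection about the hyperplane
`t = T₀/2`, i.e. under `(x,y,t) ↦ (x,y,T₀-t)`. -/
theorem stmt_8 (n : ℕ) (hn : 1 ≤ n) (T₀ : ℝ) (hT : 0 < T₀) (m : ℕ) (hm : 1 ≤ m) :
    (fun p : Hpt n => (p.1, p.2.1, T₀ - p.2.2)) ''
        Gm ({((0 : Fin n → ℝ), (0 : Fin n → ℝ), (0 : ℝ)),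
          ((0 : Fin n → ℝ), (0 : Fin n → ℝ), T₀)} : Set (Hpt n)) m
      = Gm ({((0 : Fin n → ℝ), (0 : Fin n → ℝ), (0 : ℝ)),
          ((0 : Fin n → ℝ), (0 : Fin n → ℝ), T₀)} : Set (Hpt n)) m :=
  stmt_8_general (fun θ => lagrangianReflection_image_pair θ T₀) m
end
end

section
/- Let n ≥ 1, T₀ > 0, and A = {(0,0,0), (0,0,T₀)} ⊆ ℍ^n. Writing points of ℍ^n as (z,t) with z = x + iy ∈ ℂ^n, if (z₀,t₀) ∈ G¹(A), then every point (z,t₀) with z ∈ ℂ^n and ‖z‖ ≤ ‖z₀‖ belongs to G²(A); that is, {(z,t₀) : ‖z‖ ≤ ‖z₀‖} ⊆ G²(A) (the solid Heisenberg bubble is contained in G²(A)). -/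
open MeasureTheory Set Real
open scoped ENNReal NNReal

noncomputable section

/-!
In the complex coordinates `(z, t)` a unitary map `U` of `ℂⁿ` acts by `(z, t) ↦ (U z, t)`. It
preserves the contact condition `t' = 2 Im ⟪z', z⟫` and the lengths of curves, hence it maps
geodesics to geodesics. Since the unitary group is transitive on spheres, `G^m(A)` is a union of
spheres `{(z, t) | ‖z‖ = R}` as soon as `A` is, for instance when `A` consists of points of the
`t`-axis. A point `(w, t)` with `‖w‖ ≤ R` lies on a diameter of such a sphere, and a diameter is a
geodesic: it is a straight segment, horizontal because `Im ⟪z, -z⟫ = 0`.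
-/

section NormedSpace

variable {𝕜 E : Type*}

lemma eVariationOn_lineMap_Icc_le [SeminormedAddCommGroup E] [NormedSpace ℝ E] (v w : E) :
    eVariationOn (AffineMap.lineMap v w : ℝ → E) (Icc 0 1) ≤ edist v w :=
  calc eVariationOn (AffineMap.lineMap v w : ℝ → E) (Icc 0 1)
    _ ≤ nndist v w * eVariationOn (id : ℝ → ℝ) (Icc 0 1) :=
      (lipschitzWith_lineMap v w).lipschitzOnWith.comp_eVariationOn_le (mapsTo_univ _ _)
    _ = edist v w := by
      rw [eVariationOn_id_Icc, sub_zero, ENNReal.ofReal_one, mul_one, edist_nndist]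

lemma exists_norm_eq_mem_segment_neg [NormedAddCommGroup E] [NormedSpace ℝ E] {v w : E}
    (h : ‖w‖ ≤ ‖v‖) : ∃ u : E, ‖u‖ = ‖v‖ ∧ w ∈ segment ℝ (-u) u := by
  rcases eq_or_ne w 0 with rfl | hw
  · exact ⟨v, rfl, 1 / 2, 1 / 2, by norm_num, by norm_num, by norm_num, by simp⟩
  have hw' : 0 < ‖w‖ := norm_pos_iff.2 hw
  have hv' : 0 < ‖v‖ := hw'.trans_le h
  have hr : ‖w‖ / ‖v‖ ≤ 1 := (div_le_one hv').2 h
  have hr' : 0 ≤ ‖w‖ / ‖v‖ := by positivity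
  refine ⟨(‖v‖ / ‖w‖) • w, ?_, (1 - ‖w‖ / ‖v‖) / 2, (1 + ‖w‖ / ‖v‖) / 2, by linarith, by linarith,
    by ring, ?_⟩
  · rw [norm_smul, norm_div, norm_norm, norm_norm, div_mul_cancel₀ _ hw'.ne']
  · rw [smul_neg, ← neg_smul, smul_smul, smul_smul, ← add_smul]
    convert one_smul ℝ w using 2
    field_simp
    ring

lemma exists_linearIsometryEquiv_apply_eq [RCLike 𝕜] [NormedAddCommGroup E]
    [InnerProductSpace 𝕜 E] [FiniteDimensional 𝕜 E] {v w : E} (h : ‖v‖ = ‖w‖) :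
    ∃ U : E ≃ₗᵢ[𝕜] E, U v = w := by
  rcases eq_or_ne v 0 with rfl | hv
  · exact ⟨.refl 𝕜 E, (norm_eq_zero.1 (h.symm.trans norm_zero)).symm⟩
  let e := LinearEquiv.toSpanNonzeroSingleton 𝕜 E v hv
  let L : Submodule.span 𝕜 {v} →ₗᵢ[𝕜] E :=
    { toLinearMap := LinearMap.toSpanSingleton 𝕜 E w ∘ₗ e.symm.toLinearMap
      norm_map' := e.surjective.forall.2 fun c ↦
        calc ‖e.symm (e c) • w‖ = ‖c • v‖ := by rw [e.symm_apply_apply, norm_smul, norm_smul, h] }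
  refine ⟨L.extend.toLinearIsometryEquiv rfl, ?_⟩
  calc L.extend v = L (e 1) := by rw [← L.extend_apply]; simp [e]
    _ = w := by simp [L]

lemma im_inner_sub_lineMap [NormedAddCommGroup E] [InnerProductSpace ℂ E] (v w : E) (s : ℝ) :
    (inner ℂ (w - v) (AffineMap.lineMap v w s)).im = (inner ℂ w v).im := by
  have him (u : E) : (inner ℂ u u).im = 0 := inner_self_im (𝕜 := ℂ) u
  rw [AffineMap.lineMap_apply_module', inner_add_right, ← Complex.coe_smul, inner_smul_right,
    Complex.add_im, Complex.im_ofReal_mul, him, mul_zero, zero_add, inner_sub_left, Complex.sub_im,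
    him, sub_zero]

end NormedSpace

namespace Heisenberg

variable {n : ℕ}

/-- The complex coordinates `(x, y, t) ↦ (x + iy, t)` on `ℍⁿ`, with `ℂⁿ` carrying its Hermitian
structure. -/
def complexCoord : Hpt n ≃L[ℝ] EuclideanSpace ℂ (Fin n) × ℝ :=
  LinearEquiv.toContinuousLinearEquiv
    { toFun p := (WithLp.toLp 2 fun i ↦ ⟨p.1 i, p.2.1 i⟩, p.2.2)
      invFun c := (fun i ↦ (c.1 i).re, fun i ↦ (c.1 i).im, c.2)
      map_add' _ _ := rfl
      map_smul' r p := by ext <;> simp [Complex.ext_iff]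
      left_inv _ := rfl
      right_inv _ := rfl }

/-- The horizontal coordinate `z = x + iy ∈ ℂⁿ` of a point of `ℍⁿ`. -/
def zCoord : Hpt n →L[ℝ] EuclideanSpace ℂ (Fin n) :=
  (ContinuousLinearMap.fst ℝ _ ℝ).comp complexCoord.toContinuousLinearMap

lemma zCoord_apply (p : Hpt n) (i : Fin n) : zCoord p i = ⟨p.1 i, p.2.1 i⟩ := rfl

lemma ext_zCoord {p q : Hpt n} (hz : zCoord p = zCoord q) (ht : p.2.2 = q.2.2) : p = q :=
  complexCoord.injective (Prod.ext hz ht)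

lemma im_inner_zCoord (p q : Hpt n) :
    (inner ℂ (zCoord p) (zCoord q)).im = ∑ j, (p.1 j * q.2.1 j - p.2.1 j * q.1 j) := by
  simp only [PiLp.inner_apply, Complex.im_sum, zCoord_apply]
  refine Finset.sum_congr rfl fun j _ ↦ ?_
  simp only [RCLike.inner_apply, Complex.mul_im, Complex.conj_im, mul_neg, Complex.conj_re]
  ring

lemma norm_zCoord_sq (p : Hpt n) : ‖zCoord p‖ ^ 2 = ∑ i, (p.1 i ^ 2 + p.2.1 i ^ 2) := by
  simp only [EuclideanSpace.norm_sq_eq, ← Complex.normSq_eq_norm_sq, zCoord_apply,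
    Complex.normSq_mk, ← sq]

lemma edist_hproj (p q : Hpt n) : edist (hproj p) (hproj q) = edist (zCoord p) (zCoord q) := by
  have hdist : dist (hproj p) (hproj q) = dist (zCoord p) (zCoord q) := by
    rw [dist_eq_norm (zCoord p), ← map_sub, ← sq_eq_sq₀ dist_nonneg (norm_nonneg _),
      norm_zCoord_sq, EuclideanSpace.dist_sq_eq]
    simp [hproj, Real.dist_eq, Finset.sum_add_distrib]
  rw [edist_dist, edist_dist, hdist]

lemma hLength_eq_eVariationOn_zCoord (γ : ℝ → Hpt n) (a b : ℝ) :
    hLength γ a b = eVariationOn (fun s ↦ zCoord (γ s)) (Icc a b) := by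
  simp only [hLength, eVariationOn, edist_hproj]

lemma ccDist_le_hLength {γ : ℝ → Hpt n} {a b : ℝ} (h : IsHorizontal γ a b) :
    ccDist (γ a) (γ b) ≤ hLength γ a b :=
  iInf₂_le_of_le γ a <| iInf₂_le_of_le b h <| iInf_le_of_le rfl (iInf_le _ rfl)

lemma le_ccDist {p q : Hpt n} {c : ℝ≥0∞}
    (h : ∀ γ : ℝ → Hpt n, ∀ a b, IsHorizontal γ a b → γ a = p → γ b = q → c ≤ hLength γ a b) :
    c ≤ ccDist p q :=
  le_iInf₂ fun γ a ↦ le_iInf₂ fun b hγ ↦ le_iInf₂ fun ha hb ↦ h γ a b hγ ha hb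

lemma edist_zCoord_le_ccDist (p q : Hpt n) : edist (zCoord p) (zCoord q) ≤ ccDist p q := by
  refine le_ccDist ?_
  rintro γ a b hγ rfl rfl
  rw [hLength_eq_eVariationOn_zCoord]
  exact eVariationOn.edist_le _ (left_mem_Icc.2 hγ.1) (right_mem_Icc.2 hγ.1)

lemma isGeodesicOn_of_hLength_le {γ : ℝ → Hpt n} {a b : ℝ} (h : IsHorizontal γ a b)
    (hle : hLength γ a b ≤ ccDist (γ a) (γ b)) : IsGeodesicOn γ a b :=
  ⟨h, hle.antisymm (ccDist_le_hLength h)⟩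

/-- The action `(z, t) ↦ (U z, t)` of a unitary map `U` of `ℂⁿ` on `ℍⁿ`. -/
def rotate (U : EuclideanSpace ℂ (Fin n) ≃ₗᵢ[ℂ] EuclideanSpace ℂ (Fin n)) : Hpt n ≃L[ℝ] Hpt n :=
  (complexCoord.trans
    ((U.toContinuousLinearEquiv.restrictScalars ℝ).prodCongr (.refl ℝ ℝ))).trans complexCoord.symm

section Rotate

variable (U : EuclideanSpace ℂ (Fin n) ≃ₗᵢ[ℂ] EuclideanSpace ℂ (Fin n))

lemma zCoord_rotate (p : Hpt n) : zCoord (rotate U p) = U (zCoord p) := rfl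

lemma rotate_snd_snd (p : Hpt n) : (rotate U p).2.2 = p.2.2 := rfl

lemma rotate_symm_rotate (p : Hpt n) : rotate U.symm (rotate U p) = p :=
  (rotate U).symm_apply_apply p

lemma hLength_rotate (γ : ℝ → Hpt n) (a b : ℝ) :
    hLength (fun s ↦ rotate U (γ s)) a b = hLength γ a b := by
  simp only [hLength_eq_eVariationOn_zCoord, eVariationOn, zCoord_rotate, U.edist_map]

lemma isHorizontal_rotate {γ : ℝ → Hpt n} {a b : ℝ} (h : IsHorizontal γ a b) :
    IsHorizontal (fun s ↦ rotate U (γ s)) a b := by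
  obtain ⟨hab, ⟨K, hK⟩, γ', hderiv, hcontact⟩ := h
  refine ⟨hab, ⟨_, (rotate U).lipschitz.comp_lipschitzOnWith hK⟩, fun s ↦ rotate U (γ' s), ?_, ?_⟩
  · filter_upwards [hderiv] with s hs
    exact (rotate U).hasFDerivAt.comp_hasDerivAt s hs
  · filter_upwards [hcontact] with s hs
    rwa [← im_inner_zCoord, zCoord_rotate, zCoord_rotate, U.inner_map_map, rotate_snd_snd,
      im_inner_zCoord]

lemma ccDist_le_ccDist_rotate (p q : Hpt n) :
    ccDist p q ≤ ccDist (rotate U p) (rotate U q) := by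
  refine le_ccDist fun γ a b hγ ha hb ↦ ?_
  simpa only [ha, hb, rotate_symm_rotate, hLength_rotate] using
    ccDist_le_hLength (isHorizontal_rotate U.symm hγ)

lemma isGeodesicOn_rotate {γ : ℝ → Hpt n} {a b : ℝ} (h : IsGeodesicOn γ a b) :
    IsGeodesicOn (fun s ↦ rotate U (γ s)) a b := by
  refine isGeodesicOn_of_hLength_le (isHorizontal_rotate U h.1) ?_
  rw [hLength_rotate, h.2]
  exact ccDist_le_ccDist_rotate U _ _

end Rotate

lemma exists_rotate_eq {p q : Hpt n} (ht : q.2.2 = p.2.2) (hz : ‖zCoord q‖ = ‖zCoord p‖) :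
    ∃ U, rotate U p = q := by
  obtain ⟨U, hU⟩ := exists_linearIsometryEquiv_apply_eq (𝕜 := ℂ) hz.symm
  exact ⟨U, ext_zCoord hU ht.symm⟩

section LineMap

variable {p q : Hpt n}

lemma zCoord_lineMap (p q : Hpt n) (s : ℝ) :
    zCoord (AffineMap.lineMap p q s) = AffineMap.lineMap (zCoord p) (zCoord q) s :=
  zCoord.toLinearMap.toAffineMap.apply_lineMap p q s

-- `h` says that `q` lies in the horizontal plane at `p`.
lemma isHorizontal_lineMap (h : q.2.2 - p.2.2 = 2 * (inner ℂ (zCoord q) (zCoord p)).im) :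
    IsHorizontal (AffineMap.lineMap p q : ℝ → Hpt n) 0 1 := by
  refine ⟨zero_le_one, ⟨_, (lipschitzWith_lineMap p q).lipschitzOnWith⟩, fun _ ↦ q - p,
    .of_forall fun s ↦ AffineMap.hasDerivAt_lineMap, .of_forall fun s ↦ ?_⟩
  rw [← im_inner_zCoord, zCoord_lineMap, map_sub, im_inner_sub_lineMap]
  exact h

lemma isGeodesicOn_lineMap (h : q.2.2 - p.2.2 = 2 * (inner ℂ (zCoord q) (zCoord p)).im) :
    IsGeodesicOn (AffineMap.lineMap p q : ℝ → Hpt n) 0 1 := by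
  refine isGeodesicOn_of_hLength_le (isHorizontal_lineMap h) ?_
  rw [hLength_eq_eVariationOn_zCoord, AffineMap.lineMap_apply_zero, AffineMap.lineMap_apply_one]
  simp only [zCoord_lineMap]
  exact (eVariationOn_lineMap_Icc_le _ _).trans (edist_zCoord_le_ccDist p q)

lemma segment_subset_geodJoin {S : Set (Hpt n)} (hp : p ∈ S) (hq : q ∈ S)
    (h : q.2.2 - p.2.2 = 2 * (inner ℂ (zCoord q) (zCoord p)).im) :
    segment ℝ p q ⊆ geodJoin S := by
  rw [segment_eq_image_lineMap]
  exact fun r hr ↦ ⟨p, hp, q, hq, AffineMap.lineMap p q, 0, 1, isGeodesicOn_lineMap h,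
    AffineMap.lineMap_apply_zero p q, AffineMap.lineMap_apply_one p q, hr⟩

end LineMap

/-- A set of points of `ℍⁿ` is rotation invariant if it is a union of spheres
`{(z, t) | ‖z‖ = R}`, i.e. if whether `(z, t)` belongs to it depends only on `‖z‖` and `t`. -/
def IsRotationInvariant (S : Set (Hpt n)) : Prop :=
  ∀ ⦃p⦄, p ∈ S → ∀ ⦃q : Hpt n⦄, q.2.2 = p.2.2 → ‖zCoord q‖ = ‖zCoord p‖ → q ∈ S

lemma isRotationInvariant_of_zCoord_eq_zero {S : Set (Hpt n)} (hS : ∀ p ∈ S, zCoord p = 0) :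
    IsRotationInvariant S := by
  intro p hp q ht hz
  rw [hS p hp, norm_zero, norm_eq_zero] at hz
  rwa [ext_zCoord (hz.trans (hS p hp).symm) ht]

namespace IsRotationInvariant

variable {S : Set (Hpt n)}

protected lemma geodJoin (hS : IsRotationInvariant S) : IsRotationInvariant (geodJoin S) := by
  rintro _ ⟨p, hp, q, hq, γ, a, b, hγ, rfl, rfl, s, hs, rfl⟩ r ht hz
  obtain ⟨U, rfl⟩ := exists_rotate_eq ht hz
  have hU (p : Hpt n) (hp : p ∈ S) : rotate U p ∈ S :=
    hS hp (rotate_snd_snd U p) (by rw [zCoord_rotate, U.norm_map])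
  exact ⟨_, hU _ hp, _, hU _ hq, _, a, b, isGeodesicOn_rotate U hγ, rfl, rfl, s, hs, rfl⟩

protected lemma gm (hS : IsRotationInvariant S) : ∀ m, IsRotationInvariant (Gm S m)
  | 0 => hS
  | m + 1 => (hS.gm m).geodJoin

lemma mem_geodJoin_of_norm_le (hS : IsRotationInvariant S) {p q : Hpt n} (hp : p ∈ S)
    (ht : q.2.2 = p.2.2) (hz : ‖zCoord q‖ ≤ ‖zCoord p‖) : q ∈ geodJoin S := by
  obtain ⟨u, hu, a, b, ha, hb, hab, hq⟩ := exists_norm_eq_mem_segment_neg hz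
  let pole (v : EuclideanSpace ℂ (Fin n)) : Hpt n := complexCoord.symm (v, p.2.2)
  have zCoord_pole (v) : zCoord (pole v) = v := rfl
  have pole_snd_snd (v) : (pole v).2.2 = p.2.2 := rfl
  have hpole (v) (hv : ‖v‖ = ‖u‖) : pole v ∈ S := hS hp (pole_snd_snd v) (hv.trans hu)
  refine segment_subset_geodJoin (hpole (-u) (norm_neg u)) (hpole u rfl) ?_
    ⟨a, b, ha, hb, hab, ext_zCoord ?_ ?_⟩
  · have him : (inner ℂ u u).im = 0 := inner_self_im (𝕜 := ℂ) u
    rw [zCoord_pole, zCoord_pole, pole_snd_snd, pole_snd_snd, inner_neg_right, Complex.neg_im, him]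
    ring
  · rw [map_add, map_smul, map_smul, zCoord_pole, zCoord_pole, hq]
  · calc a * p.2.2 + b * p.2.2 = q.2.2 := by rw [← add_mul, hab, one_mul, ht]

end IsRotationInvariant

end Heisenberg

open Heisenberg in
theorem stmt_10_general {n m : ℕ} {A : Set (Hpt n)} (hA : IsRotationInvariant A) {p q : Hpt n}
    (hp : p ∈ Gm A m) (ht : q.2.2 = p.2.2) (hz : ‖zCoord q‖ ≤ ‖zCoord p‖) : q ∈ Gm A (m + 1) :=
  (hA.gm m).mem_geodJoin_of_norm_le hp ht hz

/-- If `(z₀,t₀) ∈ G¹(A)` then every point `(z,t₀)` with `‖z‖ ≤ ‖z₀‖`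
belongs to `G²(A)`: the solid Heisenberg bubble is contained in `G²(A)`. -/
theorem stmt_10 (n : ℕ) (hn : 1 ≤ n) (T₀ : ℝ) (hT : 0 < T₀)
    (x₀ y₀ : Fin n → ℝ) (t₀ : ℝ)
    (h : ((x₀, y₀, t₀) : Hpt n) ∈ Gm ({((0 : Fin n → ℝ), (0 : Fin n → ℝ), (0 : ℝ)),
      ((0 : Fin n → ℝ), (0 : Fin n → ℝ), T₀)} : Set (Hpt n)) 1)
    (x y : Fin n → ℝ)
    (hz : ∑ i, (x i ^ 2 + y i ^ 2) ≤ ∑ i, (x₀ i ^ 2 + y₀ i ^ 2)) :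
    ((x, y, t₀) : Hpt n) ∈ Gm ({((0 : Fin n → ℝ), (0 : Fin n → ℝ), (0 : ℝ)),
      ((0 : Fin n → ℝ), (0 : Fin n → ℝ), T₀)} : Set (Hpt n)) 2 := by
  refine stmt_10_general (Heisenberg.isRotationInvariant_of_zCoord_eq_zero ?_) h rfl ?_
  · rintro p (rfl | rfl) <;> rfl
  · rw [← sq_le_sq₀ (norm_nonneg _) (norm_nonneg _), Heisenberg.norm_zCoord_sq,
      Heisenberg.norm_zCoord_sq]
    exact hz
end
end
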